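/- arXiv:2412.20539 — 2 statements merged into one kernel-verified Lean document; each statement's English description precedes it below -/
import Mathlib

section
/- Let X be a finite nonempty ultrametric space in which any two distinct balls containing more than one point have distinct diameters. Then the following two statements are equivalent: (i) for every finite nonempty ultrametric space Y in which any two distinct balls containing more than one point have distinct diameters, the existence of a bijective ball-preserving mapping from X to Y implies that X and Y are weakly similar; (ii) letting N denote the set of balls of X with more than one point that strictly contain some other ball with more than one point, and M denote the set of inclusion-minimal balls of X with more than one point: N is linearly ordered by inclusion, every ball in M is contained in the smallest element of N whenever N is nonempty, and all balls in M have the same cardinality. -/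
/-!
Every ball with more than one point is determined by its diameter, its label, so a bijection of `X`
acts on distances through a permutation of labels exactly when it permutes the labelled balls
accordingly. Up to a ball-preserving bijection, the other spaces with the same representing tree are
obtained by relabelling the balls, so the question is which relabellings are weak similarities.

If `X` belongs to `𝔗`, the only pairs of labels whose order is not forced by inclusion are pairs of
minimal labels, so a relabelling can be made increasing by permuting the minimal labels. Since the
minimal balls are equinumerous, this permutation is induced by a permutation of the points.

Conversely, if two consecutive labels `a < b` belong to disjoint balls, then exchanging them gives a
space with the same balls and the same spectrum. A weak similarity onto it is an isometry, that is,
a permutation of the points exchanging the two balls and preserving every other labelled ball. This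
forces both balls to be minimal, equinumerous and contained in the same larger labelled balls;
moving up through consecutive labels, one finds that labelled balls are nested in the order of their
labels except for pairs of equinumerous minimal ones, which is the class `𝔗`.
-/

/-- A semimetric on `X`: nonnegative, symmetric, and vanishing exactly on the diagonal. -/
def IsSemimetric {X : Type*} (d : X → X → ℝ) : Prop :=
  (∀ x y, 0 ≤ d x y) ∧ (∀ x y, d x y = d y x) ∧ (∀ x y, d x y = 0 ↔ x = y)

/-- An ultrametric on `X`: a semimetric satisfying the strong triangle inequality. -/
def IsUltrametric {X : Type*} (d : X → X → ℝ) : Prop :=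
  IsSemimetric d ∧ ∀ x y z, d x y ≤ max (d x z) (d z y)

/-- The spectrum of a semimetric space: the set of values taken by the distance. -/
def spec {X : Type*} (d : X → X → ℝ) : Set ℝ := {r | ∃ x y, d x y = r}

/-- `B` is a ball of `(X,d)`: `B = {x | d x t ≤ r}` for some center `t` and radius `r ≥ 0`. -/
def IsBall {X : Type*} (d : X → X → ℝ) (B : Set X) : Prop :=
  ∃ (t : X) (r : ℝ), 0 ≤ r ∧ B = {x | d x t ≤ r}

/-- `F : X → Y` is ball-preserving: images of balls are balls and preimages of balls are balls. -/
def IsBallPreserving {X Y : Type*} (d : X → X → ℝ) (ρ : Y → Y → ℝ) (F : X → Y) : Prop :=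
  (∀ B : Set X, IsBall d B → IsBall ρ (F '' B)) ∧
  (∀ B : Set Y, IsBall ρ B → IsBall d (F ⁻¹' B))

/-- `Φ` is a weak similarity from `(X,d)` to `(Y,ρ)` with scaling function `f`:
`Φ` is a bijection and `f` is a strictly increasing bijection from `spec d` onto `spec ρ`
with `f (d x y) = ρ (Φ x) (Φ y)` for all `x y`. -/
def IsWeakSimilarity {X Y : Type*} (d : X → X → ℝ) (ρ : Y → Y → ℝ)
    (Φ : X → Y) (f : ℝ → ℝ) : Prop :=
  Function.Bijective Φ ∧ Set.BijOn f (spec d) (spec ρ) ∧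
  StrictMonoOn f (spec d) ∧ ∀ x y, f (d x y) = ρ (Φ x) (Φ y)

/-- `X` and `Y` are weakly similar: some weak similarity `Φ : X → Y` exists. -/
def WeaklySimilar {X Y : Type*} (d : X → X → ℝ) (ρ : Y → Y → ℝ) : Prop :=
  ∃ (Φ : X → Y) (f : ℝ → ℝ), IsWeakSimilarity d ρ Φ f

/-- `B₂` covers `B₁` in the ballean of `(X,d)` ordered by inclusion:
both are balls, `B₁ ⊊ B₂`, and no ball lies strictly between them.
These covering pairs are exactly the arcs of the Hasse diagram of the ballean. -/
def BallCovers {X : Type*} (d : X → X → ℝ) (B₁ B₂ : Set X) : Prop :=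
  IsBall d B₁ ∧ IsBall d B₂ ∧ B₁ ⊂ B₂ ∧
  ∀ B : Set X, IsBall d B → B₁ ⊆ B → B ⊆ B₂ → B = B₁ ∨ B = B₂

/-- The diameter of a subset `A` of a semimetric space `(X,d)`. -/
noncomputable def setDiam {X : Type*} (d : X → X → ℝ) (A : Set X) : ℝ :=
  sSup {r | ∃ x ∈ A, ∃ y ∈ A, d x y = r}

/-- Balls with more than one point that strictly contain another ball with more than one
point (the non-terminal inner nodes of the representing tree). -/
def strictlyContainingBalls {X : Type*} (d : X → X → ℝ) : Set (Set X) :=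
  {B | IsBall d B ∧ B.Nontrivial ∧ ∃ B' : Set X, IsBall d B' ∧ B'.Nontrivial ∧ B' ⊂ B}

/-- Inclusion-minimal balls with more than one point. -/
def minimalNontrivialBalls {X : Type*} (d : X → X → ℝ) : Set (Set X) :=
  {B | IsBall d B ∧ B.Nontrivial ∧
    ∀ B' : Set X, IsBall d B' → B'.Nontrivial → B' ⊆ B → B' = B}

section FiniteLinearOrder

variable {α β : Type*} [LinearOrder α]

theorem perm_apply_eq_self_of_lt_iff_lt [Finite α] (q : Equiv.Perm α) {n : α}
    (h : ∀ c, q c < q n ↔ c < n) : q n = n := by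
  have himage : q '' Set.Iio n = Set.Iio (q n) := by
    ext c
    obtain ⟨c, rfl⟩ := q.surjective c
    simp [h]
  have hcard : (Set.Iio (q n)).ncard = (Set.Iio n).ncard := by
    rw [← himage, Set.ncard_image_of_injective _ q.injective]
  rcases lt_trichotomy (q n) n with hlt | heq | hlt
  · exact absurd hcard (Set.ncard_lt_ncard (Set.Iio_ssubset_Iio hlt)).ne
  · exact heq
  · exact absurd hcard (Set.ncard_lt_ncard (Set.Iio_ssubset_Iio hlt)).ne'

theorem apply_eq_self_of_strictMonoOn {A : Set α} (hA : A.Finite) {f : α → α}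
    (hmaps : Set.MapsTo f A A) (hf : StrictMonoOn f A) {a : α} (ha : a ∈ A) : f a = a := by
  have : Finite A := hA
  have hmono : StrictMono (hmaps.restrict f A A) := fun b c h => hf b.2 c.2 h
  exact congrArg Subtype.val (le_antisymm (hmono.apply_le (x := ⟨a, ha⟩)) hmono.le_apply)

theorem nonempty_orderIso_of_equiv [LinearOrder β] [Finite α] (e : α ≃ β) :
    Nonempty (α ≃o β) := by
  have := Fintype.ofFinite α
  have := Fintype.ofEquiv α e
  exact ⟨(Fintype.orderIsoFinOfCardEq α rfl).symm.trans
    (Fintype.orderIsoFinOfCardEq β (Fintype.card_congr e).symm)⟩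

theorem exists_perm_strictMonoOn_comp [LinearOrder β] {A : Set α} (hA : A.Finite) {g : α → β}
    (hg : Set.InjOn g A) :
    ∃ p : Equiv.Perm α, StrictMonoOn (g ∘ p) A ∧
      ∀ n, (n ∈ A → ∀ c ∈ A, g c < g n ↔ c < n) → p n = n := by
  classical
  have : Finite A := hA
  let e : A ≃ g '' A := Equiv.Set.imageOfInjOn g A hg
  obtain ⟨f⟩ := nonempty_orderIso_of_equiv e
  let q : Equiv.Perm A := f.toEquiv.trans e.symm
  have hgq (c : A) : g (q c) = f c := congrArg Subtype.val (e.apply_symm_apply (f c))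
  refine ⟨Equiv.Perm.ofSubtype q, fun a ha b hb hab => ?_, fun n hn => ?_⟩
  · rw [Function.comp_apply, Function.comp_apply, Equiv.Perm.ofSubtype_apply_of_mem q ha,
      Equiv.Perm.ofSubtype_apply_of_mem q hb, hgq, hgq]
    exact f.strictMono hab
  · by_cases hnA : n ∈ A
    · have hfix : q.symm ⟨n, hnA⟩ = ⟨n, hnA⟩ :=
        perm_apply_eq_self_of_lt_iff_lt q.symm fun c =>
          (f.symm.lt_iff_lt (x := e c) (y := e ⟨n, hnA⟩)).trans (hn hnA c c.2)
      rw [Equiv.Perm.ofSubtype_apply_of_mem q hnA, ← (Equiv.symm_apply_eq q).1 hfix]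
    · exact Equiv.Perm.ofSubtype_apply_of_not_mem q hnA

theorem swap_le_swap_iff {A : Set α} {a b : α} (hab : a < b)
    (hadj : ∀ c ∈ A, a < c → ¬ c < b) {v w : α} (hv : v ∈ A) (hw : w ∈ A)
    (hvw : ¬ (v = a ∧ w = b)) (hwv : ¬ (v = b ∧ w = a)) :
    Equiv.swap a b v ≤ Equiv.swap a b w ↔ v ≤ w := by
  have hav := hadj v hv
  have haw := hadj w hw
  rw [Equiv.swap_apply_def, Equiv.swap_apply_def]
  split_ifs <;> grind

end FiniteLinearOrder

theorem perm_apply_mem_iff {α : Type*} {s : Set α} (p : Equiv.Perm α) (hp : ∀ c ∉ s, p c = c)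
    {c : α} : p c ∈ s ↔ c ∈ s := by
  by_cases hc : c ∈ s
  · refine iff_of_true (by_contra fun hpc => hpc ?_) hc
    rwa [p.injective (hp _ hpc)]
  · rw [hp c hc]

section Ultrametric

variable {X Y : Type*} {d : X → X → ℝ} {ρ : Y → Y → ℝ} {F : X → Y}

/-- The smallest ball containing `x` and `y`; in the representing tree it is the lowest common
ancestor of the leaves `x` and `y`. -/
def joinBall (d : X → X → ℝ) (x y : X) : Set X := {z | d x z ≤ d x y}

theorem mem_joinBall {x y z : X} : z ∈ joinBall d x y ↔ d x z ≤ d x y := Iff.rfl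

theorem right_mem_joinBall (x y : X) : y ∈ joinBall d x y := mem_joinBall.2 le_rfl

namespace IsUltrametric

theorem nonneg (hd : IsUltrametric d) (x y : X) : 0 ≤ d x y := hd.1.1 x y

theorem comm (hd : IsUltrametric d) (x y : X) : d x y = d y x := hd.1.2.1 x y

theorem eq_zero_iff (hd : IsUltrametric d) {x y : X} : d x y = 0 ↔ x = y := hd.1.2.2 x y

theorem self_eq_zero (hd : IsUltrametric d) (x : X) : d x x = 0 := hd.eq_zero_iff.2 rfl

theorem le_max (hd : IsUltrametric d) (x y z : X) : d x y ≤ max (d x z) (d z y) := hd.2 x y z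

theorem left_mem_joinBall (hd : IsUltrametric d) (x y : X) : x ∈ joinBall d x y :=
  mem_joinBall.2 ((hd.self_eq_zero x).trans_le (hd.nonneg x y))

theorem isBall_joinBall (hd : IsUltrametric d) (x y : X) : IsBall d (joinBall d x y) :=
  ⟨x, d x y, hd.nonneg x y, Set.ext fun z => by rw [mem_joinBall, hd.comm x z, Set.mem_ofPred_eq]⟩

theorem dist_le_of_mem_joinBall (hd : IsUltrametric d) {x y u v : X} (hu : u ∈ joinBall d x y)
    (hv : v ∈ joinBall d x y) : d u v ≤ d x y :=
  (hd.le_max u v x).trans (max_le (hd.comm u x ▸ hu) hv)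

theorem joinBall_subset (hd : IsUltrametric d) {B : Set X} (hB : IsBall d B) {x y : X}
    (hx : x ∈ B) (hy : y ∈ B) : joinBall d x y ⊆ B := by
  obtain ⟨t, r, -, rfl⟩ := hB
  intro z hz
  have hxy : d x y ≤ r := (hd.le_max x y t).trans (max_le hx (hd.comm y t ▸ hy))
  have hzx : d z x ≤ r := hd.comm x z ▸ hz.trans hxy
  exact (hd.le_max z t x).trans (max_le hzx hx)

theorem exists_joinBall_eq [Finite X] (hd : IsUltrametric d) {B : Set X} (hB : IsBall d B) :
    ∃ x y, joinBall d x y = B := by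
  obtain ⟨t, r, hr, hBr⟩ := id hB
  have ht : t ∈ B := by simpa [hBr, hd.self_eq_zero t] using hr
  obtain ⟨y, hy, hmax⟩ := Set.exists_max_image B (d t) B.toFinite ⟨t, ht⟩
  exact ⟨t, y, (hd.joinBall_subset hB ht hy).antisymm hmax⟩

theorem nontrivial_joinBall_iff (hd : IsUltrametric d) {x y : X} :
    (joinBall d x y).Nontrivial ↔ x ≠ y := by
  refine ⟨?_, fun hxy => ⟨x, hd.left_mem_joinBall x y, y, right_mem_joinBall x y, hxy⟩⟩
  rintro ⟨u, hu, v, hv, huv⟩ rfl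
  have hle : d u v ≤ 0 := hd.self_eq_zero x ▸ hd.dist_le_of_mem_joinBall hu hv
  exact huv (hd.eq_zero_iff.1 (hle.antisymm (hd.nonneg u v)))

theorem setDiam_joinBall (hd : IsUltrametric d) (x y : X) : setDiam d (joinBall d x y) = d x y := by
  refine IsGreatest.csSup_eq
    ⟨⟨x, hd.left_mem_joinBall x y, y, right_mem_joinBall x y, rfl⟩, ?_⟩
  rintro _ ⟨u, hu, v, hv, rfl⟩
  exact hd.dist_le_of_mem_joinBall hu hv

theorem dist_eq_of_joinBall_eq (hd : IsUltrametric d) {x y u v : X}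
    (h : joinBall d x y = joinBall d u v) : d x y = d u v := by
  rw [← hd.setDiam_joinBall, h, hd.setDiam_joinBall]

theorem dist_eq_or_eq_of_mem_joinBall (hd : IsUltrametric d) {x y z : X}
    (hz : z ∈ joinBall d x y) : d z x = d x y ∨ d z y = d x y := by
  rw [hd.comm z x]
  refine hz.eq_or_lt.imp_right fun hlt =>
    (hd.dist_le_of_mem_joinBall hz (right_mem_joinBall x y)).antisymm ?_
  exact (le_max_iff.1 (hd.le_max x y z)).resolve_left hlt.not_ge

end IsUltrametric

/-- `F` preserves and reflects comparisons of distances from a common point. For bijections of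
finite ultrametric spaces this is the pointwise form of being ball-preserving. -/
def PreservesComparisons (d : X → X → ℝ) (ρ : Y → Y → ℝ) (F : X → Y) : Prop :=
  ∀ x y z, ρ (F x) (F y) ≤ ρ (F x) (F z) ↔ d x y ≤ d x z

theorem PreservesComparisons.preimage_joinBall (hF : PreservesComparisons d ρ F) (x y : X) :
    F ⁻¹' joinBall ρ (F x) (F y) = joinBall d x y :=
  Set.ext fun z => hF x z y

theorem PreservesComparisons.isUltrametric {ρ : X → X → ℝ} (h : PreservesComparisons d ρ id)
    (hd : IsUltrametric d) (hcomm : ∀ x y, ρ x y = ρ y x) (hself : ∀ x, ρ x x = 0) :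
    IsUltrametric ρ := by
  have hle (x y z : X) : ρ x y ≤ ρ x z ↔ d x y ≤ d x z := h x y z
  have hnonneg (x y : X) : 0 ≤ ρ x y := by
    rw [← hself x, hle, hd.self_eq_zero]
    exact hd.nonneg x y
  refine ⟨⟨hnonneg, hcomm, fun x y => ?_⟩, fun x y z => ?_⟩
  · rw [← (hnonneg x y).ge_iff_eq', ← hself x, hle, hd.self_eq_zero,
      (hd.nonneg x y).ge_iff_eq', hd.eq_zero_iff]
  · rw [hcomm z y, le_max_iff, hle, hcomm x y, hle, hd.comm y x, hd.comm y z, ← le_max_iff]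
    exact hd.le_max x y z

theorem isBallPreserving_iff_preservesComparisons [Finite X] (hd : IsUltrametric d)
    (hρ : IsUltrametric ρ) (hF : Function.Bijective F) :
    IsBallPreserving d ρ F ↔ PreservesComparisons d ρ F := by
  have : Finite Y := Finite.of_surjective F hF.surjective
  constructor
  · rintro ⟨himage, hpreimage⟩ x y z
    constructor
    · intro hy
      have hsub := hρ.joinBall_subset (himage _ (hd.isBall_joinBall x z))
        (Set.mem_image_of_mem F (hd.left_mem_joinBall x z))
        (Set.mem_image_of_mem F (right_mem_joinBall x z))
      exact (hF.injective.mem_set_image).1 (hsub hy)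
    · intro hy
      exact hd.joinBall_subset (hpreimage _ (hρ.isBall_joinBall (F x) (F z)))
        (hρ.left_mem_joinBall (F x) (F z)) (right_mem_joinBall (F x) (F z)) hy
  · refine fun h => ⟨fun B hB => ?_, fun B hB => ?_⟩
    · obtain ⟨x, y, rfl⟩ := hd.exists_joinBall_eq hB
      rw [← h.preimage_joinBall, Set.image_preimage_eq _ hF.surjective]
      exact hρ.isBall_joinBall _ _
    · obtain ⟨u, v, rfl⟩ := hρ.exists_joinBall_eq hB
      obtain ⟨x, rfl⟩ := hF.surjective u
      obtain ⟨y, rfl⟩ := hF.surjective v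
      rw [h.preimage_joinBall]
      exact hd.isBall_joinBall x y

end Ultrametric

section WeakSimilarity

variable {X Y : Type*} {d : X → X → ℝ} {ρ : Y → Y → ℝ}

theorem finite_spec [Finite X] (d : X → X → ℝ) : (spec d).Finite :=
  (Set.finite_range (Function.uncurry d)).subset fun _ ⟨x, y, h⟩ => ⟨(x, y), h⟩

theorem isWeakSimilarity_of_strictMonoOn {Φ : X → Y} {f : ℝ → ℝ} (hΦ : Function.Bijective Φ)
    (hf : StrictMonoOn f (spec d)) (h : ∀ x y, f (d x y) = ρ (Φ x) (Φ y)) :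
    IsWeakSimilarity d ρ Φ f := by
  refine ⟨hΦ, ⟨?_, hf.injOn, ?_⟩, hf, h⟩
  · rintro _ ⟨x, y, rfl⟩
    exact ⟨Φ x, Φ y, (h x y).symm⟩
  · rintro _ ⟨u, v, rfl⟩
    obtain ⟨x, rfl⟩ := hΦ.surjective u
    obtain ⟨y, rfl⟩ := hΦ.surjective v
    exact ⟨d x y, ⟨x, y, rfl⟩, h x y⟩

theorem WeaklySimilar.exists_isometry_of_spec_eq [Finite X] (h : WeaklySimilar d ρ)
    (hspec : spec ρ = spec d) :
    ∃ Φ : X → Y, Function.Bijective Φ ∧ ∀ x y, ρ (Φ x) (Φ y) = d x y := by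
  obtain ⟨Φ, f, hΦ, hf, hmono, hdist⟩ := h
  rw [hspec] at hf
  exact ⟨Φ, hΦ, fun x y => (hdist x y).symm.trans
    (apply_eq_self_of_strictMonoOn (finite_spec d) hf.mapsTo hmono ⟨x, y, rfl⟩)⟩

end WeakSimilarity

section Labels

variable {X Y : Type*} {d : X → X → ℝ} {ρ : Y → Y → ℝ} {F : X → Y}

/-- The class `𝔇`: ultrametrics whose balls with more than one point are determined by their
diameters, stated for the balls `joinBall d x y` with `x ≠ y`, which are all such balls when `X` is
finite. -/
structure HasInjectiveLabels (d : X → X → ℝ) : Prop where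
  isUltrametric : IsUltrametric d
  joinBall_eq : ∀ ⦃x y u v⦄, x ≠ y → d x y = d u v → joinBall d x y = joinBall d u v

/-- The labels of the inner nodes of the representing tree, that is, the nonzero distances. -/
def labels (d : X → X → ℝ) : Set ℝ := {c | ∃ x y, x ≠ y ∧ d x y = c}

/-- The ball labelled `c`. The set of endpoints of pairs at distance `c` is that ball when
`d` has injective labels and `c` is a label. -/
def labelBall (d : X → X → ℝ) (c : ℝ) : Set X := {x | ∃ y, d x y = c}

/-- The labels of the inclusion-minimal balls with more than one point. -/
def minimalLabels (d : X → X → ℝ) : Set ℝ :=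
  {m | m ∈ labels d ∧ ∀ c ∈ labels d, labelBall d c ⊆ labelBall d m → c = m}

theorem labels_subset_spec : labels d ⊆ spec d := fun _ ⟨x, y, _, h⟩ => ⟨x, y, h⟩

theorem left_mem_labelBall (x y : X) : x ∈ labelBall d (d x y) := ⟨y, rfl⟩

theorem IsUltrametric.pos_of_mem_labels (hd : IsUltrametric d) {c : ℝ} (hc : c ∈ labels d) :
    0 < c := by
  obtain ⟨x, y, hxy, rfl⟩ := hc
  exact (hd.nonneg x y).lt_of_ne' fun h => hxy (hd.eq_zero_iff.1 h)

theorem IsUltrametric.dist_mem_labels_iff (hd : IsUltrametric d) {x y : X} :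
    d x y ∈ labels d ↔ x ≠ y := by
  refine ⟨?_, fun hxy => ⟨x, y, hxy, rfl⟩⟩
  rintro h rfl
  exact (hd.pos_of_mem_labels h).ne' (hd.self_eq_zero x)

theorem IsUltrametric.right_mem_labelBall (hd : IsUltrametric d) (x y : X) :
    y ∈ labelBall d (d x y) := ⟨x, hd.comm y x⟩

theorem IsUltrametric.hasInjectiveLabels_iff [Finite X] (hd : IsUltrametric d) :
    HasInjectiveLabels d ↔ ∀ B₁ B₂ : Set X, IsBall d B₁ → IsBall d B₂ → B₁.Nontrivial →
      B₂.Nontrivial → setDiam d B₁ = setDiam d B₂ → B₁ = B₂ := by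
  constructor
  · rintro ⟨-, h⟩ B₁ B₂ hB₁ hB₂ hn₁ - hdiam
    obtain ⟨x, y, rfl⟩ := hd.exists_joinBall_eq hB₁
    obtain ⟨u, v, rfl⟩ := hd.exists_joinBall_eq hB₂
    rw [hd.setDiam_joinBall, hd.setDiam_joinBall] at hdiam
    exact h (hd.nontrivial_joinBall_iff.1 hn₁) hdiam
  · refine fun h => ⟨hd, fun x y u v hxy heq => ?_⟩
    have huv : u ≠ v := hd.dist_mem_labels_iff.1 (heq ▸ hd.dist_mem_labels_iff.2 hxy)
    refine h _ _ (hd.isBall_joinBall x y) (hd.isBall_joinBall u v)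
      (hd.nontrivial_joinBall_iff.2 hxy) (hd.nontrivial_joinBall_iff.2 huv) ?_
    rw [hd.setDiam_joinBall, hd.setDiam_joinBall, heq]

theorem PreservesComparisons.dist_eq_iff (hF : PreservesComparisons d ρ F)
    (hd : HasInjectiveLabels d) (hρ : HasInjectiveLabels ρ) (hbij : Function.Bijective F)
    {x y u v : X} : ρ (F x) (F y) = ρ (F u) (F v) ↔ d x y = d u v := by
  have hd' := hd.isUltrametric
  have hρ' := hρ.isUltrametric
  by_cases hxy : x = y
  · rw [hxy, hd'.self_eq_zero, hρ'.self_eq_zero, eq_comm, hρ'.eq_zero_iff, hbij.injective.eq_iff,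
      eq_comm (a := (0 : ℝ)), hd'.eq_zero_iff]
  · have hjoin : joinBall ρ (F x) (F y) = joinBall ρ (F u) (F v) ↔
        joinBall d x y = joinBall d u v := by
      rw [← hF.preimage_joinBall, ← hF.preimage_joinBall,
        hbij.surjective.preimage_injective.eq_iff]
    exact ⟨fun h => hd'.dist_eq_of_joinBall_eq
        (hjoin.1 (hρ.joinBall_eq (hbij.injective.ne hxy) h)),
      fun h => hρ'.dist_eq_of_joinBall_eq (hjoin.2 (hd.joinBall_eq hxy h))⟩

namespace HasInjectiveLabels

theorem labelBall_dist (hd : HasInjectiveLabels d) {x y : X} (hxy : x ≠ y) :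
    labelBall d (d x y) = joinBall d x y := by
  ext z
  constructor
  · rintro ⟨w, hw⟩
    rw [hd.joinBall_eq hxy hw.symm]
    exact hd.isUltrametric.left_mem_joinBall z w
  · intro hz
    rcases hd.isUltrametric.dist_eq_or_eq_of_mem_joinBall hz with h | h
    exacts [⟨x, h⟩, ⟨y, h⟩]

theorem isBall_labelBall (hd : HasInjectiveLabels d) {c : ℝ} (hc : c ∈ labels d) :
    IsBall d (labelBall d c) := by
  obtain ⟨x, y, hxy, rfl⟩ := hc
  rw [hd.labelBall_dist hxy]
  exact hd.isUltrametric.isBall_joinBall x y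

theorem nontrivial_labelBall (hd : HasInjectiveLabels d) {c : ℝ} (hc : c ∈ labels d) :
    (labelBall d c).Nontrivial := by
  obtain ⟨x, y, hxy, rfl⟩ := hc
  rw [hd.labelBall_dist hxy]
  exact hd.isUltrametric.nontrivial_joinBall_iff.2 hxy

theorem exists_labelBall_eq [Finite X] (hd : HasInjectiveLabels d) {B : Set X} (hB : IsBall d B)
    (hn : B.Nontrivial) : ∃ c ∈ labels d, labelBall d c = B := by
  obtain ⟨x, y, rfl⟩ := hd.isUltrametric.exists_joinBall_eq hB
  have hxy := hd.isUltrametric.nontrivial_joinBall_iff.1 hn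
  exact ⟨d x y, ⟨x, y, hxy, rfl⟩, hd.labelBall_dist hxy⟩

theorem dist_le_of_mem_labelBall (hd : HasInjectiveLabels d) {c : ℝ} (hc : c ∈ labels d) {u v : X}
    (hu : u ∈ labelBall d c) (hv : v ∈ labelBall d c) : d u v ≤ c := by
  obtain ⟨x, y, hxy, rfl⟩ := hc
  rw [hd.labelBall_dist hxy] at hu hv
  exact hd.isUltrametric.dist_le_of_mem_joinBall hu hv

theorem labelBall_subset_of_le (hd : HasInjectiveLabels d) {a b : ℝ} (ha : a ∈ labels d)
    (hb : b ∈ labels d) (hab : a ≤ b) {x : X} (hxa : x ∈ labelBall d a) (hxb : x ∈ labelBall d b) :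
    labelBall d a ⊆ labelBall d b := by
  obtain ⟨y, rfl⟩ := hxa
  obtain ⟨z, rfl⟩ := hxb
  rw [hd.labelBall_dist (hd.isUltrametric.dist_mem_labels_iff.1 ha),
    hd.labelBall_dist (hd.isUltrametric.dist_mem_labels_iff.1 hb)]
  exact fun w hw => le_trans hw hab

theorem le_of_labelBall_subset (hd : HasInjectiveLabels d) {a b : ℝ} (ha : a ∈ labels d)
    (hb : b ∈ labels d) (h : labelBall d a ⊆ labelBall d b) : a ≤ b := by
  obtain ⟨x, y, -, rfl⟩ := ha
  exact hd.dist_le_of_mem_labelBall hb (h (left_mem_labelBall x y))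
    (h (hd.isUltrametric.right_mem_labelBall x y))

theorem labelBall_injOn (hd : HasInjectiveLabels d) : Set.InjOn (labelBall d) (labels d) :=
  fun _ ha _ hb h => le_antisymm (hd.le_of_labelBall_subset ha hb h.subset)
    (hd.le_of_labelBall_subset hb ha h.symm.subset)

theorem image_minimalLabels [Finite X] (hd : HasInjectiveLabels d) :
    labelBall d '' minimalLabels d = minimalNontrivialBalls d := by
  ext B
  constructor
  · rintro ⟨m, ⟨hm, hmin⟩, rfl⟩
    refine ⟨hd.isBall_labelBall hm, hd.nontrivial_labelBall hm, fun B' hB' hn' hsub => ?_⟩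
    obtain ⟨c, hc, rfl⟩ := hd.exists_labelBall_eq hB' hn'
    rw [hmin c hc hsub]
  · rintro ⟨hB, hn, hmin⟩
    obtain ⟨m, hm, rfl⟩ := hd.exists_labelBall_eq hB hn
    exact ⟨m, ⟨hm, fun c hc hsub => hd.labelBall_injOn hc hm
      (hmin _ (hd.isBall_labelBall hc) (hd.nontrivial_labelBall hc) hsub)⟩, rfl⟩

theorem image_labels_diff_minimalLabels [Finite X] (hd : HasInjectiveLabels d) :
    labelBall d '' (labels d \ minimalLabels d) = strictlyContainingBalls d := by
  ext B
  constructor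
  · rintro ⟨n, ⟨hn, hnmin⟩, rfl⟩
    obtain ⟨c, hc, hsub, hcn⟩ : ∃ c ∈ labels d, labelBall d c ⊆ labelBall d n ∧ c ≠ n := by
      by_contra! h
      exact hnmin ⟨hn, h⟩
    exact ⟨hd.isBall_labelBall hn, hd.nontrivial_labelBall hn, labelBall d c,
      hd.isBall_labelBall hc, hd.nontrivial_labelBall hc,
      hsub.ssubset_of_ne (hd.labelBall_injOn.ne hc hn hcn)⟩
  · rintro ⟨hB, hnt, B', hB', hnt', hss⟩
    obtain ⟨n, hn, rfl⟩ := hd.exists_labelBall_eq hB hnt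
    obtain ⟨c, hc, rfl⟩ := hd.exists_labelBall_eq hB' hnt'
    exact ⟨n, ⟨hn, fun hmin => hss.ne (congrArg _ (hmin.2 c hc hss.subset))⟩, rfl⟩

end HasInjectiveLabels

end Labels

section Broom

variable {X : Type*} {d : X → X → ℝ}

/-- The class `𝔗` in terms of labels: the labelled balls are nested in the order of their labels,
except that equinumerous minimal balls may be disjoint. The representing tree is then a broom, a
path of inner nodes whose last one carries stars of equal size. -/
def IsBroom (d : X → X → ℝ) : Prop :=
  ∀ a ∈ labels d, ∀ b ∈ labels d, a ≤ b → labelBall d a ⊆ labelBall d b ∨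
    a ∈ minimalLabels d ∧ b ∈ minimalLabels d ∧ (labelBall d a).ncard = (labelBall d b).ncard

namespace IsBroom

theorem labelBall_subset (hB : IsBroom d) {a b : ℝ} (ha : a ∈ labels d) (hb : b ∈ labels d)
    (hmin : ¬ (a ∈ minimalLabels d ∧ b ∈ minimalLabels d)) (hab : a ≤ b) :
    labelBall d a ⊆ labelBall d b :=
  (hB a ha b hb hab).resolve_right fun h => hmin ⟨h.1, h.2.1⟩

theorem lt_of_mem_minimalLabels (hB : IsBroom d) {m n : ℝ} (hm : m ∈ minimalLabels d)
    (hn : n ∈ labels d \ minimalLabels d) : m < n := by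
  by_contra! hnm
  have hsub := hB.labelBall_subset hn.1 hm.1 (fun h => hn.2 h.1) hnm
  exact hn.2 (hm.2 n hn.1 hsub ▸ hm)

theorem ncard_eq (hB : IsBroom d) {m k : ℝ} (hm : m ∈ minimalLabels d)
    (hk : k ∈ minimalLabels d) : (labelBall d m).ncard = (labelBall d k).ncard := by
  wlog hmk : m ≤ k generalizing m k
  · exact (this hk hm (le_of_not_ge hmk)).symm
  rcases hB m hm.1 k hk.1 hmk with hsub | h
  · rw [hk.2 m hm.1 hsub]
  · exact h.2.2

end IsBroom

theorem HasInjectiveLabels.labelBall_subset_of_chain [Finite X] (hd : HasInjectiveLabels d)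
    (hchain : ∀ a ∈ labels d \ minimalLabels d, ∀ b ∈ labels d \ minimalLabels d,
      labelBall d a ⊆ labelBall d b ∨ labelBall d b ⊆ labelBall d a)
    (hleast : ∀ n ∈ labels d \ minimalLabels d,
      (∀ b ∈ labels d \ minimalLabels d, labelBall d n ⊆ labelBall d b) →
      ∀ m ∈ minimalLabels d, labelBall d m ⊆ labelBall d n)
    {m n : ℝ} (hm : m ∈ minimalLabels d) (hn : n ∈ labels d \ minimalLabels d) :
    labelBall d m ⊆ labelBall d n := by
  have hfin : (labels d \ minimalLabels d).Finite :=
    (finite_spec d).subset (Set.sdiff_subset.trans labels_subset_spec)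
  obtain ⟨k, hk, hmin⟩ := Set.exists_min_image _ id hfin ⟨n, hn⟩
  have hsub : ∀ b ∈ labels d \ minimalLabels d, labelBall d k ⊆ labelBall d b := by
    intro b hb
    refine (hchain k hk b hb).elim id fun h => ?_
    have hkb : k = b := (hmin b hb).antisymm (hd.le_of_labelBall_subset hb.1 hk.1 h)
    rw [hkb]
  exact (hleast k hk hsub m hm).trans (hsub n hn)

theorem HasInjectiveLabels.isBroom_iff [Finite X] (hd : HasInjectiveLabels d) :
    IsBroom d ↔
      ((∀ B₁ ∈ strictlyContainingBalls d, ∀ B₂ ∈ strictlyContainingBalls d,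
          B₁ ⊆ B₂ ∨ B₂ ⊆ B₁) ∧
        (∀ B₀ ∈ strictlyContainingBalls d,
          (∀ B ∈ strictlyContainingBalls d, B₀ ⊆ B) →
          ∀ B ∈ minimalNontrivialBalls d, B ⊆ B₀) ∧
        (∀ B₁ ∈ minimalNontrivialBalls d, ∀ B₂ ∈ minimalNontrivialBalls d,
          B₁.ncard = B₂.ncard)) := by
  simp only [← hd.image_minimalLabels, ← hd.image_labels_diff_minimalLabels, Set.forall_mem_image]
  constructor
  · refine fun hB =>
      ⟨fun a ha b hb => ?_, fun n hn _ m hm => ?_, fun m hm k hk => hB.ncard_eq hm hk⟩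
    · exact (le_total a b).imp (hB.labelBall_subset ha.1 hb.1 fun h => ha.2 h.1)
        (hB.labelBall_subset hb.1 ha.1 fun h => hb.2 h.1)
    · exact hB.labelBall_subset hm.1 hn.1 (fun h => hn.2 h.2) (hB.lt_of_mem_minimalLabels hm hn).le
  · rintro ⟨hchain, hleast, hcard⟩ a ha b hb hab
    have hminimal {m n : ℝ} (hm : m ∈ minimalLabels d) (hn : n ∈ labels d \ minimalLabels d) :
        labelBall d m ⊆ labelBall d n := hd.labelBall_subset_of_chain hchain hleast hm hn
    have hsub_of_subset (h : labelBall d b ⊆ labelBall d a) : labelBall d a ⊆ labelBall d b := by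
      rw [hab.antisymm (hd.le_of_labelBall_subset hb ha h)]
    by_cases hma : a ∈ minimalLabels d <;> by_cases hmb : b ∈ minimalLabels d
    · exact Or.inr ⟨hma, hmb, hcard hma hmb⟩
    · exact Or.inl (hminimal hma ⟨hb, hmb⟩)
    · exact Or.inl (hsub_of_subset (hminimal hmb ⟨ha, hma⟩))
    · exact Or.inl ((hchain ⟨ha, hma⟩ ⟨hb, hmb⟩).elim id hsub_of_subset)

end Broom

section InducedPermutation

variable {X : Type*} {d : X → X → ℝ} {Φ : Equiv.Perm X} {p : Equiv.Perm ℝ}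

theorem preimage_labelBall_of_dist_eq (h : ∀ x y, d (Φ x) (Φ y) = p (d x y)) (c : ℝ) :
    Φ ⁻¹' labelBall d (p c) = labelBall d c := by
  ext x
  refine Φ.surjective.exists.trans (exists_congr fun y => ?_)
  rw [h, p.injective.eq_iff]

theorem ncard_labelBall_of_dist_eq (h : ∀ x y, d (Φ x) (Φ y) = p (d x y)) (c : ℝ) :
    (labelBall d (p c)).ncard = (labelBall d c).ncard := by
  rw [← Set.ncard_image_of_injective (labelBall d c) Φ.injective,
    ← preimage_labelBall_of_dist_eq h c, Set.image_preimage_eq _ Φ.surjective]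

theorem HasInjectiveLabels.dist_eq_of_preimage_labelBall (hd : HasInjectiveLabels d)
    (hp : ∀ c, p c ∈ labels d ↔ c ∈ labels d)
    (h : ∀ c ∈ labels d, Φ ⁻¹' labelBall d (p c) = labelBall d c) {x y : X} (hxy : x ≠ y) :
    d (Φ x) (Φ y) = p (d x y) := by
  have hd' := hd.isUltrametric
  have hmem {c : ℝ} (hc : c ∈ labels d) (z : X) : Φ z ∈ labelBall d (p c) ↔ z ∈ labelBall d c :=
    Set.ext_iff.1 (h c hc) z
  have hl : d x y ∈ labels d := hd'.dist_mem_labels_iff.2 hxy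
  have hl' : d (Φ x) (Φ y) ∈ labels d := hd'.dist_mem_labels_iff.2 (Φ.injective.ne hxy)
  obtain ⟨c, hc⟩ := p.surjective (d (Φ x) (Φ y))
  rw [← hc] at hl' ⊢
  have hcl : c ∈ labels d := (hp c).1 hl'
  have hx : x ∈ labelBall d c := (hmem hcl x).1 (hc ▸ left_mem_labelBall _ _)
  have hy : y ∈ labelBall d c := (hmem hcl y).1 (hc ▸ hd'.right_mem_labelBall _ _)
  have hΦx : Φ x ∈ labelBall d (p (d x y)) := (hmem hl x).2 (left_mem_labelBall x y)
  have hΦy : Φ y ∈ labelBall d (p (d x y)) := (hmem hl y).2 (hd'.right_mem_labelBall x y)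
  refine le_antisymm (hc ▸ hd.dist_le_of_mem_labelBall ((hp _).2 hl) hΦx hΦy)
    (hd.le_of_labelBall_subset ((hp _).2 hl) hl' ?_)
  rw [← Φ.surjective.preimage_subset_preimage_iff, h _ hl, h c hcl]
  exact hd.labelBall_subset_of_le hl hcl (hd.dist_le_of_mem_labelBall hcl hx hy)
    (left_mem_labelBall x y) hx

end InducedPermutation

section Sufficiency

variable {X Y : Type*} {d : X → X → ℝ} {ρ : Y → Y → ℝ} {F : X → Y}

/-- The label of the parent of the leaf `x` in the representing tree, that is, of the smallest ball
with more than one point containing `x`. It has the junk value `0` in a one-point space. -/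
noncomputable def leafLabel (d : X → X → ℝ) (x : X) : ℝ :=
  sInf {c | c ∈ labels d ∧ x ∈ labelBall d c}

theorem IsUltrametric.isLeast_leafLabel [Finite X] [Nontrivial X] (hd : IsUltrametric d) (x : X) :
    IsLeast {c | c ∈ labels d ∧ x ∈ labelBall d c} (leafLabel d x) := by
  obtain ⟨y, hy⟩ := exists_ne x
  have hfin : {c | c ∈ labels d ∧ x ∈ labelBall d c}.Finite :=
    (finite_spec d).subset fun c hc => labels_subset_spec hc.1
  exact ⟨Set.Nonempty.csInf_mem
      ⟨d x y, hd.dist_mem_labels_iff.2 hy.symm, left_mem_labelBall x y⟩ hfin,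
    fun c hc => csInf_le hfin.bddBelow hc⟩

section

variable [Finite X] [Nontrivial X]

theorem HasInjectiveLabels.leafLabel_eq_iff (hd : HasInjectiveLabels d) {m : ℝ}
    (hm : m ∈ minimalLabels d) {x : X} : leafLabel d x = m ↔ x ∈ labelBall d m := by
  obtain ⟨hx, hleast⟩ := hd.isUltrametric.isLeast_leafLabel x
  refine ⟨fun h => h ▸ hx.2, fun hxm => hm.2 _ hx.1 ?_⟩
  exact hd.labelBall_subset_of_le hx.1 hm.1 (hleast ⟨hm.1, hxm⟩) hx.2 hxm

theorem IsBroom.leafLabel_le_iff (hB : IsBroom d) (hd : IsUltrametric d) {n : ℝ}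
    (hn : n ∈ labels d \ minimalLabels d) {x : X} : leafLabel d x ≤ n ↔ x ∈ labelBall d n := by
  obtain ⟨hx, hleast⟩ := hd.isLeast_leafLabel x
  exact ⟨fun hle => hB.labelBall_subset hx.1 hn.1 (fun h => hn.2 h.2) hle hx.2,
    fun hxn => hleast ⟨hn.1, hxn⟩⟩

theorem IsBroom.ncard_leafLabel_fiber (hB : IsBroom d) (hd : HasInjectiveLabels d)
    (p : Equiv.Perm ℝ) (hp : ∀ c ∉ minimalLabels d, p c = c) (c : ℝ) :
    {x | p (leafLabel d x) = c}.ncard = {x | leafLabel d x = c}.ncard := by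
  obtain ⟨b, rfl⟩ := p.surjective c
  simp only [p.injective.eq_iff]
  by_cases hb : b ∈ minimalLabels d
  · have hpb : p b ∈ minimalLabels d := (perm_apply_mem_iff p hp).2 hb
    simp only [hd.leafLabel_eq_iff hb, hd.leafLabel_eq_iff hpb]
    exact hB.ncard_eq hb hpb
  · rw [hp b hb]

theorem IsBroom.exists_perm_leafLabel (hB : IsBroom d) (hd : HasInjectiveLabels d)
    (p : Equiv.Perm ℝ) (hp : ∀ c ∉ minimalLabels d, p c = c) :
    ∃ Φ : Equiv.Perm X, ∀ x, leafLabel d (Φ x) = p (leafLabel d x) :=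
  ⟨Equiv.ofFiberEquiv fun c => (Finite.card_eq.1 (hB.ncard_leafLabel_fiber hd p hp c)).some,
    Equiv.ofFiberEquiv_map _⟩

end

theorem IsBroom.exists_perm_dist_eq [Finite X] (hB : IsBroom d) (hd : HasInjectiveLabels d)
    (p : Equiv.Perm ℝ) (hp : ∀ c ∉ minimalLabels d, p c = c) :
    ∃ Φ : Equiv.Perm X, ∀ x y, d (Φ x) (Φ y) = p (d x y) := by
  have hd' := hd.isUltrametric
  have hp_zero : p 0 = 0 := hp 0 fun h => (hd'.pos_of_mem_labels h.1).false
  cases subsingleton_or_nontrivial X with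
  | inl _ =>
    exact ⟨1, fun x y => by
      rw [Subsingleton.elim y x, hd'.self_eq_zero, hd'.self_eq_zero, hp_zero]⟩
  | inr _ =>
    obtain ⟨Φ, hΦ⟩ := hB.exists_perm_leafLabel hd p hp
    have hp_labels (c : ℝ) : p c ∈ labels d ↔ c ∈ labels d :=
      perm_apply_mem_iff p fun c hc => hp c fun h => hc h.1
    have hle {c n : ℝ} (hn : n ∈ labels d \ minimalLabels d) : p c ≤ n ↔ c ≤ n := by
      by_cases hc : c ∈ minimalLabels d
      · exact iff_of_true (hB.lt_of_mem_minimalLabels ((perm_apply_mem_iff p hp).2 hc) hn).le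
          (hB.lt_of_mem_minimalLabels hc hn).le
      · rw [hp c hc]
    refine ⟨Φ, fun x y => ?_⟩
    by_cases hxy : x = y
    · rw [hxy, hd'.self_eq_zero, hd'.self_eq_zero, hp_zero]
    refine hd.dist_eq_of_preimage_labelBall hp_labels (fun c hc => Set.ext fun z => ?_) hxy
    rw [Set.mem_preimage]
    by_cases hm : c ∈ minimalLabels d
    · rw [← hd.leafLabel_eq_iff ((perm_apply_mem_iff p hp).2 hm), hΦ, p.injective.eq_iff,
        hd.leafLabel_eq_iff hm]
    · rw [hp c hm, ← hB.leafLabel_le_iff hd' ⟨hc, hm⟩, hΦ, hle ⟨hc, hm⟩,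
        hB.leafLabel_le_iff hd' ⟨hc, hm⟩]

theorem PreservesComparisons.exists_scaling (hF : PreservesComparisons d ρ F)
    (hd : HasInjectiveLabels d) (hρ : HasInjectiveLabels ρ) (hbij : Function.Bijective F) :
    ∃ g : ℝ → ℝ, Set.InjOn g (spec d) ∧ ∀ x y, g (d x y) = ρ (F x) (F y) := by
  have hfactors : Function.FactorsThrough (fun z : X × X => ρ (F z.1) (F z.2))
      (Function.uncurry d) := fun _ _ h => (hF.dist_eq_iff hd hρ hbij).2 h
  obtain ⟨g, hg⟩ := (Function.factorsThrough_iff _).1 hfactors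
  have hg' (x y : X) : g (d x y) = ρ (F x) (F y) := (congrFun hg (x, y)).symm
  refine ⟨g, ?_, hg'⟩
  rintro _ ⟨x, y, rfl⟩ _ ⟨u, v, rfl⟩ h
  rw [hg', hg'] at h
  exact (hF.dist_eq_iff hd hρ hbij).1 h

theorem IsBroom.dist_map_le (hB : IsBroom d) (hd : HasInjectiveLabels d) (hρ : IsUltrametric ρ)
    (hF : PreservesComparisons d ρ F) {x y u v : X}
    (hmin : ¬ (d x y ∈ minimalLabels d ∧ d u v ∈ minimalLabels d)) (hle : d x y ≤ d u v) :
    ρ (F x) (F y) ≤ ρ (F u) (F v) := by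
  have hd' := hd.isUltrametric
  by_cases hxy : x = y
  · rw [hxy, hρ.self_eq_zero]
    exact hρ.nonneg _ _
  have huv : u ≠ v := by
    rintro rfl
    rw [hd'.self_eq_zero] at hle
    exact hxy (hd'.eq_zero_iff.1 (hle.antisymm (hd'.nonneg x y)))
  have hsub := hB.labelBall_subset (hd'.dist_mem_labels_iff.2 hxy) (hd'.dist_mem_labels_iff.2 huv)
    hmin hle
  rw [hd.labelBall_dist huv, ← hF.preimage_joinBall] at hsub
  exact hρ.dist_le_of_mem_joinBall (hsub (left_mem_labelBall x y))
    (hsub (hd'.right_mem_labelBall x y))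

theorem IsBroom.weaklySimilar [Finite X] (hB : IsBroom d) (hd : HasInjectiveLabels d)
    (hρ : HasInjectiveLabels ρ) (hbij : Function.Bijective F) (hF : PreservesComparisons d ρ F) :
    WeaklySimilar d ρ := by
  obtain ⟨g, hinj, hg⟩ := hF.exists_scaling hd hρ hbij
  have hlt {a b : ℝ} (ha : a ∈ spec d) (hb : b ∈ spec d)
      (hmin : ¬ (a ∈ minimalLabels d ∧ b ∈ minimalLabels d)) (hab : a < b) : g a < g b := by
    refine lt_of_le_of_ne ?_ (hinj.ne ha hb hab.ne)
    obtain ⟨x, y, rfl⟩ := ha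
    obtain ⟨u, v, rfl⟩ := hb
    rw [hg, hg]
    exact hB.dist_map_le hd hρ.isUltrametric hF hmin hab.le
  obtain ⟨p, hmono, hfix⟩ := exists_perm_strictMonoOn_comp (finite_spec d) hinj
  have hp : ∀ n ∉ minimalLabels d, p n = n := by
    refine fun n hn => hfix n fun hns c hc => ⟨fun hgc => ?_, hlt hc hns fun h => hn h.2⟩
    by_contra! hnc
    rcases hnc.eq_or_lt with rfl | hnc
    · exact hgc.false
    · exact hgc.not_gt (hlt hns hc (fun h => hn h.1) hnc)
  obtain ⟨Φ, hΦ⟩ := hB.exists_perm_dist_eq hd p hp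
  refine ⟨F ∘ Φ, g ∘ p, isWeakSimilarity_of_strictMonoOn (hbij.comp Φ.bijective) hmono ?_⟩
  intro x y
  rw [Function.comp_apply, ← hΦ, hg, Function.comp_apply, Function.comp_apply]

end Sufficiency

section Necessity

variable {X : Type*} {d : X → X → ℝ} {a b : ℝ}

/-- The distance `d` with the labels `a` and `b` exchanged. -/
noncomputable def swapLabels (d : X → X → ℝ) (a b : ℝ) (x y : X) : ℝ := Equiv.swap a b (d x y)

theorem spec_swapLabels (ha : a ∈ spec d) (hb : b ∈ spec d) : spec (swapLabels d a b) = spec d := by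
  have hmaps {c : ℝ} (hc : c ∈ spec d) : Equiv.swap a b c ∈ spec d := by
    rw [Equiv.swap_apply_def]
    split_ifs
    exacts [hb, ha, hc]
  ext c
  constructor
  · rintro ⟨x, y, rfl⟩
    exact hmaps ⟨x, y, rfl⟩
  · intro hc
    obtain ⟨x, y, hxy⟩ := hmaps hc
    exact ⟨x, y, by rw [swapLabels, hxy, Equiv.swap_apply_self]⟩

theorem preservesComparisons_swapLabels (hab : a < b) (hadj : ∀ c ∈ spec d, a < c → ¬ c < b)
    (hdisj : Disjoint (labelBall d a) (labelBall d b)) :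
    PreservesComparisons d (swapLabels d a b) id := by
  intro x y z
  refine swap_le_swap_iff hab hadj ⟨x, y, rfl⟩ ⟨x, z, rfl⟩ ?_ ?_
  · exact fun ⟨hy, hz⟩ => hdisj.notMem_of_mem_left ⟨y, hy⟩ ⟨z, hz⟩
  · exact fun ⟨hy, hz⟩ => hdisj.notMem_of_mem_left ⟨z, hz⟩ ⟨y, hy⟩

theorem HasInjectiveLabels.hasInjectiveLabels_swapLabels (hd : HasInjectiveLabels d)
    (ha : a ∈ labels d) (hb : b ∈ labels d) (h : PreservesComparisons d (swapLabels d a b) id) :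
    HasInjectiveLabels (swapLabels d a b) := by
  have hd' := hd.isUltrametric
  have hself (x : X) : swapLabels d a b x x = 0 := by
    rw [swapLabels, hd'.self_eq_zero, Equiv.swap_apply_of_ne_of_ne (hd'.pos_of_mem_labels ha).ne
      (hd'.pos_of_mem_labels hb).ne]
  refine ⟨h.isUltrametric hd' (fun x y => congrArg (Equiv.swap a b) (hd'.comm x y)) hself, ?_⟩
  intro x y u v hxy heq
  exact (h.preimage_joinBall x y).trans
    ((hd.joinBall_eq hxy ((Equiv.swap a b).injective heq)).trans (h.preimage_joinBall u v).symm)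

theorem HasInjectiveLabels.exists_perm_dist_eq_swap [Finite X] (hd : HasInjectiveLabels d)
    (h : ∀ ρ : X → X → ℝ, HasInjectiveLabels ρ → PreservesComparisons d ρ id → WeaklySimilar d ρ)
    (ha : a ∈ labels d) (hb : b ∈ labels d) (hab : a < b)
    (hadj : ∀ c ∈ spec d, a < c → ¬ c < b) (hdisj : Disjoint (labelBall d a) (labelBall d b)) :
    ∃ Φ : Equiv.Perm X, ∀ x y, d (Φ x) (Φ y) = Equiv.swap a b (d x y) := by
  have hid := preservesComparisons_swapLabels hab hadj hdisj
  obtain ⟨Φ, hΦ, hdist⟩ := (h _ (hd.hasInjectiveLabels_swapLabels ha hb hid)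
    hid).exists_isometry_of_spec_eq
      (spec_swapLabels (labels_subset_spec ha) (labels_subset_spec hb))
  refine ⟨Equiv.ofBijective Φ hΦ, fun x y => ?_⟩
  rw [← hdist x y, swapLabels, Equiv.swap_apply_self, Equiv.ofBijective_apply,
    Equiv.ofBijective_apply]

section

variable {Φ : Equiv.Perm X}

theorem mem_minimalLabels_of_dist_eq_swap (h : ∀ x y, d (Φ x) (Φ y) = Equiv.swap a b (d x y))
    (ha : a ∈ labels d) (hdisj : Disjoint (labelBall d a) (labelBall d b)) :
    a ∈ minimalLabels d := by
  refine ⟨ha, fun c ⟨x, y, _, hc⟩ hca => by_contra fun hne => ?_⟩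
  have hxc : x ∈ labelBall d c := ⟨y, hc⟩
  have hcb : c ≠ b := by
    rintro rfl
    exact hdisj.notMem_of_mem_left (hca hxc) hxc
  have hsub : labelBall d c ⊆ labelBall d b := by
    rw [← preimage_labelBall_of_dist_eq h c, ← preimage_labelBall_of_dist_eq h b,
      Equiv.swap_apply_of_ne_of_ne hne hcb, Equiv.swap_apply_right]
    exact Set.preimage_mono hca
  exact hdisj.notMem_of_mem_left (hca hxc) (hsub hxc)

theorem labelBall_subset_of_dist_eq_swap (h : ∀ x y, d (Φ x) (Φ y) = Equiv.swap a b (d x y))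
    {c : ℝ} (hca : c ≠ a) (hcb : c ≠ b) (hsub : labelBall d b ⊆ labelBall d c) :
    labelBall d a ⊆ labelBall d c := by
  rw [← preimage_labelBall_of_dist_eq h a, ← preimage_labelBall_of_dist_eq h c,
    Equiv.swap_apply_left, Equiv.swap_apply_of_ne_of_ne hca hcb]
  exact Set.preimage_mono hsub

end

theorem HasInjectiveLabels.labelBall_subset_or_of_covBy [Finite X] (hd : HasInjectiveLabels d)
    (h : ∀ ρ : X → X → ℝ, HasInjectiveLabels ρ → PreservesComparisons d ρ id → WeaklySimilar d ρ)
    {a b : labels d} (hab : a ⋖ b) :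
    labelBall d a ⊆ labelBall d b ∨
      ↑a ∈ minimalLabels d ∧ ↑b ∈ minimalLabels d ∧
        (labelBall d a).ncard = (labelBall d b).ncard ∧
        ∀ c > b, labelBall d b ⊆ labelBall d c → labelBall d a ⊆ labelBall d c := by
  obtain ⟨a, ha⟩ := a
  obtain ⟨b, hb⟩ := b
  refine or_iff_not_imp_left.2 fun hsub => ?_
  have hlt : a < b := hab.lt
  have hdisj : Disjoint (labelBall d a) (labelBall d b) :=
    Set.disjoint_left.2 fun x hxa hxb => hsub (hd.labelBall_subset_of_le ha hb hlt.le hxa hxb)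
  have hadj : ∀ c ∈ spec d, a < c → ¬ c < b := by
    rintro _ ⟨x, y, rfl⟩ hac hcb
    have hxy : x ≠ y := by
      rintro rfl
      exact (hd.isUltrametric.pos_of_mem_labels ha).not_gt (hd.isUltrametric.self_eq_zero x ▸ hac)
    exact hab.2 (c := ⟨d x y, hd.isUltrametric.dist_mem_labels_iff.2 hxy⟩) hac hcb
  obtain ⟨Φ, hΦ⟩ := hd.exists_perm_dist_eq_swap h ha hb hlt hadj hdisj
  refine ⟨mem_minimalLabels_of_dist_eq_swap hΦ ha hdisj,
    mem_minimalLabels_of_dist_eq_swap (Equiv.swap_comm a b ▸ hΦ) hb hdisj.symm, ?_, ?_⟩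
  · rw [← ncard_labelBall_of_dist_eq hΦ a, Equiv.swap_apply_left]
  · exact fun c hbc => labelBall_subset_of_dist_eq_swap hΦ (hlt.trans hbc).ne' (ne_of_gt hbc)

theorem HasInjectiveLabels.isBroom_of_forall_weaklySimilar [Finite X] (hd : HasInjectiveLabels d)
    (h : ∀ ρ : X → X → ℝ, HasInjectiveLabels ρ → PreservesComparisons d ρ id → WeaklySimilar d ρ) :
    IsBroom d := by
  have : Finite (labels d) := (finite_spec d).subset labels_subset_spec
  intro a ha b hb
  lift a to labels d using ha
  lift b to labels d using hb
  intro hab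
  induction a using WellFoundedGT.induction with | ind a ih
  rcases (show a ≤ b from hab).eq_or_lt with rfl | hlt
  · exact Or.inl subset_rfl
  obtain ⟨e, hae, heb⟩ := exists_covBy_le_of_lt hlt
  rcases hd.labelBall_subset_or_of_covBy h hae with hsub | ⟨hma, hme, hcard, hsup⟩
  · refine Or.inl (hsub.trans ((ih e hae.lt heb).resolve_right fun ⟨hme, _⟩ => ?_))
    exact hae.lt.ne (Subtype.ext (hme.2 a a.2 hsub))
  · rcases heb.eq_or_lt with rfl | heb
    · exact Or.inr ⟨hma, hme, hcard⟩
    · exact (ih e hae.lt heb.le).imp (hsup b heb) fun ⟨_, hmb, hcard'⟩ =>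
        ⟨hma, hmb, hcard.trans hcard'⟩

end Necessity

/-- Let `X` be a finite nonempty ultrametric space in which distinct balls
with more than one point have distinct diameters (`X ∈ 𝔇`). Then: (for every such `Y`,
a bijective ball-preserving map `X → Y` forces `X` and `Y` to be weakly similar) iff
(the set `N` of balls with more than one point strictly containing another such ball is
linearly ordered by inclusion, every inclusion-minimal ball with more than one point is
contained in the least element of `N` whenever `N ≠ ∅`, and all inclusion-minimal balls
with more than one point have the same cardinality), i.e. `X ∈ 𝔗`. -/
theorem stmt4 {X : Type} [Finite X] [Nonempty X] (d : X → X → ℝ)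
    (hd : IsUltrametric d)
    (hinj : ∀ B₁ B₂ : Set X, IsBall d B₁ → IsBall d B₂ → B₁.Nontrivial →
      B₂.Nontrivial → setDiam d B₁ = setDiam d B₂ → B₁ = B₂) :
    (∀ (Y : Type) (_ : Finite Y) (_ : Nonempty Y) (ρ : Y → Y → ℝ),
        IsUltrametric ρ →
        (∀ B₁ B₂ : Set Y, IsBall ρ B₁ → IsBall ρ B₂ → B₁.Nontrivial →
          B₂.Nontrivial → setDiam ρ B₁ = setDiam ρ B₂ → B₁ = B₂) →
        (∃ F : X → Y, Function.Bijective F ∧ IsBallPreserving d ρ F) →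
        WeaklySimilar d ρ) ↔
      ((∀ B₁ ∈ strictlyContainingBalls d, ∀ B₂ ∈ strictlyContainingBalls d,
          B₁ ⊆ B₂ ∨ B₂ ⊆ B₁) ∧
        (∀ B₀ ∈ strictlyContainingBalls d,
          (∀ B ∈ strictlyContainingBalls d, B₀ ⊆ B) →
          ∀ B ∈ minimalNontrivialBalls d, B ⊆ B₀) ∧
        (∀ B₁ ∈ minimalNontrivialBalls d, ∀ B₂ ∈ minimalNontrivialBalls d,
          B₁.ncard = B₂.ncard)) := by
  have hD : HasInjectiveLabels d := hd.hasInjectiveLabels_iff.2 hinj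
  rw [← hD.isBroom_iff]
  constructor
  · intro h
    refine hD.isBroom_of_forall_weaklySimilar fun ρ hρ hid => ?_
    exact h X ‹_› ‹_› ρ hρ.isUltrametric (hρ.isUltrametric.hasInjectiveLabels_iff.1 hρ)
      ⟨id, Function.bijective_id, (isBallPreserving_iff_preservesComparisons hd hρ.isUltrametric
        Function.bijective_id).2 hid⟩
  · rintro hB Y _ _ ρ hρ hinjρ ⟨F, hbij, hF⟩
    exact hB.weaklySimilar hD (hρ.hasInjectiveLabels_iff.2 hinjρ) hbij
      ((isBallPreserving_iff_preservesComparisons hd hρ hbij).1 hF)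
end

section
/- Let Φ : X → Y be a weak similarity between finite nonempty semimetric spaces (X,d) and (Y,ρ). Then for every ball B of X the image Φ(B) is a ball of Y, and the map B ↦ Φ(B) is a bijection from the ballean of X onto the ballean of Y satisfying B₁ ⊆ B₂ if and only if Φ(B₁) ⊆ Φ(B₂), for all balls B₁, B₂ of X (i.e., B ↦ Φ(B) is an order isomorphism of the balleans ordered by inclusion). -/
/-!
A weak similarity preserves all comparisons between distances, so it maps
`{z | d z t ≤ d x t}` onto `{y | ρ y (Φ t) ≤ ρ (Φ x) (Φ t)}`. This says nothing about a ball whose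
radius is not a distance from its center; but when the distances from each center form a closed
set, in particular in a finite space, every radius can be lowered to such a distance without
changing the ball.
-/

/-- Among the distances from `t` not exceeding a given `r ≥ 0` there is always a largest one, so
that every ball has a radius attained at one of its points. Without this a weak similarity may fail
to preserve balls: if `f` shifts the spectrum `[0, 1) ∪ [2, 3]` to `[0, 2]` by closing the gap, then
the ball of radius `1` around `t` goes to `{y | ρ y (Φ t) < 1}`, which need not be a ball. -/
def HasAttainedRadii {X : Type*} (d : X → X → ℝ) : Prop :=
  ∀ (t : X) (r : ℝ), 0 ≤ r → ∃ m, IsGreatest (Set.range (d · t) ∩ Set.Iic r) m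

section

variable {X Y : Type*} {d : X → X → ℝ} {ρ : Y → Y → ℝ} {Φ : X → Y} {f : ℝ → ℝ}

theorem IsSemimetric.hasAttainedRadii_of_isClosed_range (hd : IsSemimetric d)
    (hclosed : ∀ t, IsClosed (Set.range (d · t))) : HasAttainedRadii d := by
  intro t r hr
  have hself : d t t = 0 := (hd.2.2 t t).2 rfl
  have hne : (Set.range (d · t) ∩ Set.Iic r).Nonempty := ⟨0, ⟨t, hself⟩, hr⟩
  have hbdd : BddAbove (Set.range (d · t) ∩ Set.Iic r) := bddAbove_Iic.mono Set.inter_subset_right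
  exact ⟨_, ((hclosed t).inter isClosed_Iic).isGreatest_csSup hne hbdd⟩

theorem IsSemimetric.hasAttainedRadii_of_finite [Finite X] (hd : IsSemimetric d) :
    HasAttainedRadii d :=
  hd.hasAttainedRadii_of_isClosed_range fun _ => (Set.finite_range _).isClosed

theorem IsSemimetric.isBall_setOf_le (hd : IsSemimetric d) (t x : X) :
    IsBall d {z | d z t ≤ d x t} :=
  ⟨t, d x t, hd.1 x t, rfl⟩

theorem IsBall.exists_eq_setOf_le {B : Set X} (hB : IsBall d B) (hrad : HasAttainedRadii d) :
    ∃ t x, B = {z | d z t ≤ d x t} := by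
  obtain ⟨t, r, hr, rfl⟩ := hB
  obtain ⟨_, ⟨⟨x, rfl⟩, hxr⟩, hmax⟩ := hrad t r hr
  refine ⟨t, x, Set.ext fun z => ?_⟩
  rw [Set.mem_ofPred_eq, Set.mem_ofPred_eq]
  exact ⟨fun hz => hmax ⟨⟨z, rfl⟩, hz⟩, fun hz => hz.trans hxr⟩

namespace IsWeakSimilarity

theorem dist_le_dist_iff (h : IsWeakSimilarity d ρ Φ f) (x y z w : X) :
    ρ (Φ x) (Φ y) ≤ ρ (Φ z) (Φ w) ↔ d x y ≤ d z w := by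
  obtain ⟨-, -, hmono, hf⟩ := h
  rw [← hf, ← hf]
  exact hmono.le_iff_le ⟨x, y, rfl⟩ ⟨z, w, rfl⟩

theorem image_setOf_le (h : IsWeakSimilarity d ρ Φ f) (t x : X) :
    Φ '' {z | d z t ≤ d x t} = {y | ρ y (Φ t) ≤ ρ (Φ x) (Φ t)} := by
  ext y
  obtain ⟨z, rfl⟩ := h.1.surjective y
  rw [h.1.injective.mem_set_image, Set.mem_ofPred_eq, Set.mem_ofPred_eq, h.dist_le_dist_iff]

theorem isBall_image (h : IsWeakSimilarity d ρ Φ f) (hρ : IsSemimetric ρ)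
    (hrad : HasAttainedRadii d) {B : Set X} (hB : IsBall d B) : IsBall ρ (Φ '' B) := by
  obtain ⟨t, x, rfl⟩ := hB.exists_eq_setOf_le hrad
  rw [h.image_setOf_le]
  exact hρ.isBall_setOf_le (Φ t) (Φ x)

theorem exists_isBall_image_eq (h : IsWeakSimilarity d ρ Φ f) (hd : IsSemimetric d)
    (hrad : HasAttainedRadii ρ) {B : Set Y} (hB : IsBall ρ B) : ∃ A, IsBall d A ∧ Φ '' A = B := by
  obtain ⟨u, v, rfl⟩ := hB.exists_eq_setOf_le hrad
  obtain ⟨t, rfl⟩ := h.1.surjective u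
  obtain ⟨x, rfl⟩ := h.1.surjective v
  exact ⟨_, hd.isBall_setOf_le t x, h.image_setOf_le t x⟩

end IsWeakSimilarity

end

theorem stmt6_general {X Y : Type*} (d : X → X → ℝ) (ρ : Y → Y → ℝ)
    (hd : IsSemimetric d) (hρ : IsSemimetric ρ)
    (hradX : HasAttainedRadii d) (hradY : HasAttainedRadii ρ)
    (Φ : X → Y) (f : ℝ → ℝ) (h : IsWeakSimilarity d ρ Φ f) :
    (∀ B : Set X, IsBall d B → IsBall ρ (Φ '' B)) ∧
    Set.BijOn (fun B : Set X => Φ '' B) {B | IsBall d B} {B | IsBall ρ B} ∧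
    (∀ B₁ B₂ : Set X, IsBall d B₁ → IsBall d B₂ → (B₁ ⊆ B₂ ↔ Φ '' B₁ ⊆ Φ '' B₂)) := by
  have himage : ∀ B : Set X, IsBall d B → IsBall ρ (Φ '' B) := fun _ => h.isBall_image hρ hradX
  have hinj : Function.Injective Φ := h.1.injective
  exact ⟨himage,
    ⟨himage, hinj.image_injective.injOn, fun _ => h.exists_isBall_image_eq hd hradY⟩,
    fun _ _ _ _ => (Set.image_subset_image_iff hinj).symm⟩

/-- A weak similarity `Φ` maps balls to balls, and `B ↦ Φ '' B` is an order
isomorphism of the balleans ordered by inclusion. -/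
theorem stmt6 {X Y : Type*} [Finite X] [Finite Y] [Nonempty X] [Nonempty Y]
    (d : X → X → ℝ) (ρ : Y → Y → ℝ) (hd : IsSemimetric d) (hρ : IsSemimetric ρ)
    (Φ : X → Y) (f : ℝ → ℝ) (h : IsWeakSimilarity d ρ Φ f) :
    (∀ B : Set X, IsBall d B → IsBall ρ (Φ '' B)) ∧
    Set.BijOn (fun B : Set X => Φ '' B) {B | IsBall d B} {B | IsBall ρ B} ∧
    (∀ B₁ B₂ : Set X, IsBall d B₁ → IsBall d B₂ → (B₁ ⊆ B₂ ↔ Φ '' B₁ ⊆ Φ '' B₂)) :=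
  stmt6_general d ρ hd hρ hd.hasAttainedRadii_of_finite hρ.hasAttainedRadii_of_finite Φ f h
end
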